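/- (Theorem 1, Lipschitz-free mirror descent, weak ergodic convergence) Let Q ⊆ E be a compact convex set, ψ a differentiable σ-strongly convex prox-function on Q (σ > 0), f : Q → ℝ a convex continuous function with minimizer x* over Q, and suppose there is R > 0 with V_ψ(x*, x) ≤ R for all x ∈ Q. Fix a ∈ [0, 1] and m ≥ −1. Let x^1 ∈ Q and, for k = 1, …, N, set ∇f(x^k) ∈ ∂f(x^k), G_k = max_{j=1,…,k} { ‖∇f(x^j)‖_* · j^{(1−a)/2} }, γ_k = √(2σR)/(G_k k^{a/2}), and x^{k+1} = argmin_{x ∈ Q} { ⟨∇f(x^k), x⟩ + (1/γ_k) V_ψ(x, x^k) }. Define weights ω_k^{(m)} = γ_k^{−m} if −1 ≤ m ≤ 0 and ω_k^{(m)} = k^{m/2} if m > 0, and let x̂ = (∑_{k=1}^N ω_k^{(m)} x^k) / (∑_{k=1}^N ω_k^{(m)}). Then f(x̂) − f(x*) ≤ √(R/(2σ)) · ( N^{(m+1)/2} + ∑_{k=1}^N k^{(m−1)/2} ) / ( ∑_{k=1}^N k^{m/2} ) · max_{k=1,…,N} ‖∇f(x^k)‖_*. -/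

import Mathlib

/-- The Bregman divergence `V_ψ(x, y) = ψ(x) − ψ(y) − ⟨∇ψ(y), x − y⟩` associated with a
differentiable function `ψ` with gradient `ψ'`. -/
noncomputable def bregman {E : Type*} [NormedAddCommGroup E] [NormedSpace ℝ E]
    (ψ : E → ℝ) (ψ' : E → E →L[ℝ] ℝ) (x y : E) : ℝ :=
  ψ x - ψ y - ψ' y (x - y)

/-- `g` is a subgradient of `f` at `x` relative to `Q`. -/
def IsSubgradientAt {E : Type*} [NormedAddCommGroup E] [NormedSpace ℝ E]
    (f : E → ℝ) (Q : Set E) (g : E →L[ℝ] ℝ) (x : E) : Prop :=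
  ∀ y ∈ Q, f x + g (y - x) ≤ f y

/-! For a step `p` of mirror descent from `y`, optimality of `p` and Young's inequality give
`γ ⟨g, y - u⟩ ≤ V(u, y) - V(u, p) + (γ ‖g‖)² / (2σ)`.  Multiply the `k`-th such inequality by
`ω_k / γ_k`.  These factors are nondecreasing in `k`, so summation by parts bounds the divergence
terms by `R ω_N / γ_N`.  No Lipschitz constant is involved because `G_k` already contains
`‖g_k‖ k^((1-a)/2)`, so that `(γ_k ‖g_k‖)² ≤ 2σR / k` and the quadratic terms contribute at most
`R ω_k / (γ_k k)`.  Finally `1 / γ_k ≤ β √k` with `β = max ‖g_k‖ / √(2σR)`, and the weights are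
chosen so that, for a constant `A`, both `A k^(m/2) ≤ ω_k` and `ω_k / γ_k ≤ A β k^((m+1)/2)`;
the constant `A` cancels in the weighted average.
-/

open Finset
open scoped Topology

section Bregman

variable {E : Type*} [NormedAddCommGroup E] [NormedSpace ℝ E]
  {Q : Set E} {ψ : E → ℝ} {ψ' : E → E →L[ℝ] ℝ}

theorem le_bregman_of_uniformConvexOn {φ : ℝ → ℝ} (hψ : UniformConvexOn Q φ ψ) {x y : E}
    (hx : x ∈ Q) (hy : y ∈ Q) (hd : HasFDerivWithinAt ψ (ψ' y) Q y) :
    φ ‖x - y‖ ≤ bregman ψ ψ' x y := by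
  have hunit : ∀ᶠ t : ℝ in 𝓝[>] 0, t ∈ Set.Ioo (0 : ℝ) 1 := Ioo_mem_nhdsGT one_pos
  have hslope : Filter.Tendsto (fun t : ℝ => t⁻¹ • (ψ (y + t • (x - y)) - ψ y)) (𝓝[>] 0)
      (𝓝 (ψ' y (x - y))) := by
    refine hd.lim ?_ ?_ ?_
    · rw [← zero_smul ℝ (x - y)]
      exact (Continuous.tendsto (by fun_prop) 0).mono_left nhdsWithin_le_nhds
    · filter_upwards [hunit] with t ht
      exact hψ.1.add_smul_sub_mem hy hx ⟨ht.1.le, ht.2.le⟩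
    · refine tendsto_const_nhds.congr' ?_
      filter_upwards [hunit] with t ht
      rw [inv_smul_smul₀ ht.1.ne']
  have hchord : Filter.Tendsto (fun t : ℝ => ψ x - ψ y - (1 - t) * φ ‖x - y‖) (𝓝[>] 0)
      (𝓝 (ψ x - ψ y - (1 - 0) * φ ‖x - y‖)) :=
    (Continuous.tendsto (by fun_prop) 0).mono_left nhdsWithin_le_nhds
  have hle : ψ' y (x - y) ≤ ψ x - ψ y - (1 - 0) * φ ‖x - y‖ := by
    refine le_of_tendsto_of_tendsto hslope hchord ?_
    filter_upwards [hunit] with t ht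
    have hconv := hψ.2 hx hy ht.1.le (sub_nonneg.2 ht.2.le) (add_sub_cancel t 1)
    rw [show t • x + (1 - t) • y = y + t • (x - y) by module] at hconv
    rw [smul_eq_mul, inv_mul_le_iff₀ ht.1]
    simp only [smul_eq_mul] at hconv
    linarith
  unfold bregman
  linarith

theorem bregman_three_point (ψ : E → ℝ) (ψ' : E → E →L[ℝ] ℝ) (u p x : E) :
    bregman ψ ψ' u x - bregman ψ ψ' u p - bregman ψ ψ' p x = (ψ' p - ψ' x) (u - p) := by
  simp only [bregman, map_sub, sub_apply]
  ring

theorem hasFDerivWithinAt_bregman {p : E} (hd : HasFDerivWithinAt ψ (ψ' p) Q p) (x : E) :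
    HasFDerivWithinAt (fun z => bregman ψ ψ' z x) (ψ' p - ψ' x) Q p :=
  (hd.sub_const (ψ x)).sub <|
    (ψ' x).hasFDerivWithinAt.comp p ((hasFDerivWithinAt_id p Q).sub_const x) (Set.mapsTo_univ _ _)

theorem apply_sub_le_of_isMinOn_add_bregman (hQ : Convex ℝ Q) {g : E →L[ℝ] ℝ} {c : ℝ} {x p u : E}
    (hp : p ∈ Q) (hu : u ∈ Q) (hd : HasFDerivWithinAt ψ (ψ' p) Q p)
    (hmin : IsMinOn (fun z => g z + c * bregman ψ ψ' z x) Q p) :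
    g (p - u) ≤ c * (bregman ψ ψ' u x - bregman ψ ψ' u p - bregman ψ ψ' p x) := by
  have hoptimal : 0 ≤ (g + c • (ψ' p - ψ' x)) (u - p) :=
    hmin.localize.hasFDerivWithinAt_nonneg
      (g.hasFDerivWithinAt.add ((hasFDerivWithinAt_bregman hd x).const_mul c))
      (sub_mem_posTangentConeAt_of_segment_subset (hQ.segment_subset hp hu))
  have hflip : g (u - p) = -g (p - u) := by rw [← map_neg, neg_sub]
  rw [add_apply, smul_apply, smul_eq_mul, hflip] at hoptimal
  rw [bregman_three_point]
  linarith

theorem mul_apply_sub_le_of_isMinOn_add_bregman {σ γ : ℝ} (hσ : 0 < σ) (hγ : 0 < γ)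
    (hψ : StrongConvexOn Q σ ψ) {g : E →L[ℝ] ℝ} {x p u : E}
    (hx : x ∈ Q) (hp : p ∈ Q) (hu : u ∈ Q)
    (hdx : HasFDerivWithinAt ψ (ψ' x) Q x) (hdp : HasFDerivWithinAt ψ (ψ' p) Q p)
    (hmin : IsMinOn (fun z => g z + (1 / γ) * bregman ψ ψ' z x) Q p) :
    γ * g (x - u) ≤ bregman ψ ψ' u x - bregman ψ ψ' u p + (γ * ‖g‖) ^ 2 / (2 * σ) := by
  have hprox : γ * g (p - u) ≤ bregman ψ ψ' u x - bregman ψ ψ' u p - bregman ψ ψ' p x := by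
    rw [← le_inv_mul_iff₀ hγ, ← one_div]
    exact apply_sub_le_of_isMinOn_add_bregman hψ.1 hp hu hdp hmin
  have hmove : γ * g (x - p) ≤ γ * ‖g‖ * ‖p - x‖ := by
    rw [norm_sub_rev, mul_assoc]
    gcongr
    exact (le_abs_self _).trans (g.le_opNorm _)
  have hyoung : γ * ‖g‖ * ‖p - x‖ ≤ (γ * ‖g‖) ^ 2 / (2 * σ) + σ / 2 * ‖p - x‖ ^ 2 := by
    rw [← sub_nonneg]
    calc 0 ≤ (γ * ‖g‖ - σ * ‖p - x‖) ^ 2 / (2 * σ) := by positivity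
      _ = _ := by field_simp; ring
  have hstrong : σ / 2 * ‖p - x‖ ^ 2 ≤ bregman ψ ψ' p x :=
    le_bregman_of_uniformConvexOn hψ hp hx hdx
  have hsplit : γ * g (x - u) = γ * g (x - p) + γ * g (p - u) := by
    rw [← mul_add, ← map_add, sub_add_sub_cancel]
  linarith

end Bregman

theorem sum_mul_sub_succ_le {𝕜 : Type*} [CommRing 𝕜] [LinearOrder 𝕜] [IsStrictOrderedRing 𝕜]
    {τ V : ℕ → 𝕜} {R : 𝕜} {m n : ℕ} (hmn : m ≤ n) (hτm : 0 ≤ τ m)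
    (hτ : MonotoneOn τ (Set.Icc m n)) (hV : ∀ k ∈ Set.Icc m n, V k ≤ R) :
    ∑ k ∈ Icc m n, τ k * (V k - V (k + 1)) ≤ τ n * (R - V (n + 1)) := by
  induction n, hmn using Nat.le_induction with
  | base =>
    rw [Icc_self, sum_singleton]
    gcongr
    exact hV m ⟨le_rfl, le_rfl⟩
  | succ n hmn ih =>
    have hsub : Set.Icc m n ⊆ Set.Icc m (n + 1) := Set.Icc_subset_Icc_right n.le_succ
    have hn : n + 1 ∈ Set.Icc m (n + 1) := ⟨hmn.trans n.le_succ, le_rfl⟩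
    calc ∑ k ∈ Icc m (n + 1), τ k * (V k - V (k + 1))
        = ∑ k ∈ Icc m n, τ k * (V k - V (k + 1)) + τ (n + 1) * (V (n + 1) - V (n + 1 + 1)) :=
          sum_Icc_succ_top hn.1 _
      _ ≤ τ n * (R - V (n + 1)) + τ (n + 1) * (V (n + 1) - V (n + 1 + 1)) := by
          gcongr
          exact ih (hτ.mono hsub) fun k hk => hV k (hsub hk)
      _ ≤ τ (n + 1) * (R - V (n + 1)) + τ (n + 1) * (V (n + 1) - V (n + 1 + 1)) := by
          gcongr
          · exact sub_nonneg.2 (hV _ hn)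
          · exact hτ (hsub ⟨hmn, le_rfl⟩) hn n.le_succ
      _ = τ (n + 1) * (R - V (n + 1 + 1)) := by ring

/-- `x` performs `N` steps of mirror descent for `f` on `Q` with prox-function `ψ`, subgradients
`g` and step sizes `γ`.  The iterates are `x 1, …, x (N + 1)`; the value `x 0` is irrelevant. -/
structure IsMirrorDescent {E : Type*} [NormedAddCommGroup E] [NormedSpace ℝ E]
    (f : E → ℝ) (Q : Set E) (ψ : E → ℝ) (ψ' : E → E →L[ℝ] ℝ)
    (g : ℕ → E →L[ℝ] ℝ) (γ : ℕ → ℝ) (N : ℕ) (x : ℕ → E) : Prop where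
  mem_one : x 1 ∈ Q
  isSubgradientAt : ∀ k, 1 ≤ k → k ≤ N → IsSubgradientAt f Q (g k) (x k)
  step : ∀ k, 1 ≤ k → k ≤ N → x (k + 1) ∈ Q ∧
    IsMinOn (fun z => g k z + (1 / γ k) * bregman ψ ψ' z (x k)) Q (x (k + 1))

namespace IsMirrorDescent

variable {E : Type*} [NormedAddCommGroup E] [NormedSpace ℝ E] {f : E → ℝ} {Q : Set E}
  {ψ : E → ℝ} {ψ' : E → E →L[ℝ] ℝ} {g : ℕ → E →L[ℝ] ℝ} {γ ω : ℕ → ℝ} {N : ℕ} {x : ℕ → E}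
  {σ R : ℝ} {u : E}

theorem mem (h : IsMirrorDescent f Q ψ ψ' g γ N x) {k : ℕ} (hk : k ∈ Set.Icc 1 (N + 1)) :
    x k ∈ Q := by
  obtain ⟨hk1, hkN⟩ := hk
  cases k, hk1 using Nat.le_induction with
  | base => exact h.mem_one
  | succ j hj => exact (h.step j hj (Nat.le_of_succ_le_succ hkN)).1

theorem mul_gap_le (h : IsMirrorDescent f Q ψ ψ' g γ N x) (hσ : 0 < σ)
    (hψd : ∀ y ∈ Q, HasFDerivWithinAt ψ (ψ' y) Q y) (hψ : StrongConvexOn Q σ ψ) (hu : u ∈ Q)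
    {k : ℕ} (hk : k ∈ Set.Icc 1 N) (hγ : 0 < γ k) :
    γ k * (f (x k) - f u) ≤
      bregman ψ ψ' u (x k) - bregman ψ ψ' u (x (k + 1)) + (γ k * ‖g k‖) ^ 2 / (2 * σ) := by
  have hxk : x k ∈ Q := h.mem ⟨hk.1, hk.2.trans N.le_succ⟩
  obtain ⟨hnext, hmin⟩ := h.step k hk.1 hk.2
  have hgap : f (x k) - f u ≤ g k (x k - u) := by
    have hsub := h.isSubgradientAt k hk.1 hk.2 u hu
    rw [← neg_sub, map_neg] at hsub
    linarith
  exact (mul_le_mul_of_nonneg_left hgap hγ.le).trans <|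
    mul_apply_sub_le_of_isMinOn_add_bregman hσ hγ hψ hxk hnext hu (hψd _ hxk) (hψd _ hnext) hmin

theorem sum_mul_gap_le (h : IsMirrorDescent f Q ψ ψ' g γ N x) (hσ : 0 < σ)
    (hψd : ∀ y ∈ Q, HasFDerivWithinAt ψ (ψ' y) Q y) (hψ : StrongConvexOn Q σ ψ) (hu : u ∈ Q)
    (hN : 1 ≤ N) (hV : ∀ k ∈ Set.Icc 1 N, bregman ψ ψ' u (x k) ≤ R)
    (hγ : ∀ k ∈ Set.Icc 1 N, 0 < γ k) (hω : ∀ k ∈ Set.Icc 1 N, 0 ≤ ω k)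
    (hmono : MonotoneOn (fun k => ω k / γ k) (Set.Icc 1 N)) :
    ∑ k ∈ Icc 1 N, ω k * (f (x k) - f u) ≤
      ω N / γ N * R + ∑ k ∈ Icc 1 N, ω k / γ k * ((γ k * ‖g k‖) ^ 2 / (2 * σ)) := by
  set V : ℕ → ℝ := fun k => bregman ψ ψ' u (x k)
  have hτ : ∀ k ∈ Set.Icc 1 N, 0 ≤ ω k / γ k := fun k hk => div_nonneg (hω k hk) (hγ k hk).le
  have hVlast : 0 ≤ V (N + 1) := by
    have hlast := h.mem (Set.right_mem_Icc.2 (Nat.le_add_left 1 N))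
    exact (by positivity : 0 ≤ σ / 2 * ‖u - x (N + 1)‖ ^ 2).trans
      (le_bregman_of_uniformConvexOn hψ hu hlast (hψd _ hlast))
  calc ∑ k ∈ Icc 1 N, ω k * (f (x k) - f u)
      = ∑ k ∈ Icc 1 N, ω k / γ k * (γ k * (f (x k) - f u)) := by
        refine sum_congr rfl fun k hk => ?_
        rw [← mul_assoc, div_mul_cancel₀ _ (hγ k (mem_Icc.1 hk)).ne']
    _ ≤ ∑ k ∈ Icc 1 N, ω k / γ k * (V k - V (k + 1) + (γ k * ‖g k‖) ^ 2 / (2 * σ)) := by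
        refine sum_le_sum fun k hk => ?_
        have hk := mem_Icc.1 hk
        exact mul_le_mul_of_nonneg_left (h.mul_gap_le hσ hψd hψ hu hk (hγ k hk)) (hτ k hk)
    _ = ∑ k ∈ Icc 1 N, ω k / γ k * (V k - V (k + 1))
        + ∑ k ∈ Icc 1 N, ω k / γ k * ((γ k * ‖g k‖) ^ 2 / (2 * σ)) := by
        simp only [mul_add, sum_add_distrib]
    _ ≤ ω N / γ N * (R - V (N + 1))
        + ∑ k ∈ Icc 1 N, ω k / γ k * ((γ k * ‖g k‖) ^ 2 / (2 * σ)) := by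
        gcongr
        exact sum_mul_sub_succ_le hN (hτ 1 ⟨le_rfl, hN⟩) hmono hV
    _ ≤ ω N / γ N * R + ∑ k ∈ Icc 1 N, ω k / γ k * ((γ k * ‖g k‖) ^ 2 / (2 * σ)) := by
        gcongr
        · exact hτ N ⟨hN, le_rfl⟩
        · exact sub_le_self R hVlast

theorem map_centerMass_sub_le (h : IsMirrorDescent f Q ψ ψ' g γ N x) (hσ : 0 < σ)
    (hψd : ∀ y ∈ Q, HasFDerivWithinAt ψ (ψ' y) Q y) (hψ : StrongConvexOn Q σ ψ)
    (hf : ConvexOn ℝ Q f) (hu : u ∈ Q) (hN : 1 ≤ N)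
    (hV : ∀ k ∈ Set.Icc 1 N, bregman ψ ψ' u (x k) ≤ R)
    (hγ : ∀ k ∈ Set.Icc 1 N, 0 < γ k) (hω : ∀ k ∈ Set.Icc 1 N, 0 < ω k)
    (hmono : MonotoneOn (fun k => ω k / γ k) (Set.Icc 1 N))
    (hγg : ∀ k ∈ Set.Icc 1 N, (γ k * ‖g k‖) ^ 2 ≤ 2 * σ * R / k) :
    f ((Icc 1 N).centerMass ω x) - f u ≤
      R * ((ω N / γ N + ∑ k ∈ Icc 1 N, ω k / γ k / k) / ∑ k ∈ Icc 1 N, ω k) := by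
  have hωsum : 0 < ∑ k ∈ Icc 1 N, ω k :=
    sum_pos (fun k hk => hω k (mem_Icc.1 hk)) (nonempty_Icc.2 hN)
  have hjensen : f ((Icc 1 N).centerMass ω x) - f u ≤
      (∑ k ∈ Icc 1 N, ω k)⁻¹ * ∑ k ∈ Icc 1 N, ω k * (f (x k) - f u) :=
    (hf.add_const (-f u)).map_centerMass_le (fun k hk => (hω k (mem_Icc.1 hk)).le) hωsum
      fun k hk => h.mem (Set.Icc_subset_Icc_right N.le_succ (mem_Icc.1 hk))
  have hquadratic : ∀ k ∈ Icc 1 N,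
      ω k / γ k * ((γ k * ‖g k‖) ^ 2 / (2 * σ)) ≤ R * (ω k / γ k / k) := fun k hk => by
    have hk := mem_Icc.1 hk
    have hτ := (div_pos (hω k hk) (hγ k hk)).le
    calc ω k / γ k * ((γ k * ‖g k‖) ^ 2 / (2 * σ))
        ≤ ω k / γ k * (2 * σ * R / k / (2 * σ)) := by
          gcongr
          exact hγg k hk
      _ = R * (ω k / γ k / k) := by field_simp
  calc f ((Icc 1 N).centerMass ω x) - f u
      ≤ (∑ k ∈ Icc 1 N, ω k)⁻¹ * ∑ k ∈ Icc 1 N, ω k * (f (x k) - f u) := hjensen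
    _ ≤ (∑ k ∈ Icc 1 N, ω k)⁻¹ * (ω N / γ N * R + ∑ k ∈ Icc 1 N, R * (ω k / γ k / k)) := by
        gcongr
        exact (h.sum_mul_gap_le hσ hψd hψ hu hN hV hγ (fun k hk => (hω k hk).le) hmono).trans
          (add_le_add le_rfl (sum_le_sum hquadratic))
    _ = R * ((ω N / γ N + ∑ k ∈ Icc 1 N, ω k / γ k / k) / ∑ k ∈ Icc 1 N, ω k) := by
        rw [← mul_sum]
        ring

end IsMirrorDescent

theorem rpow_mul_rpow_eq_sqrt {t : ℝ} (ht : 0 < t) (a : ℝ) :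
    t ^ ((1 - a) / 2) * t ^ (a / 2) = √t := by
  rw [← Real.rpow_add ht, Real.sqrt_eq_rpow]
  ring_nf

/-- The Lipschitz-free step-size rule `γ k = c / (G k * k ^ (a / 2))` for `1 ≤ k ≤ N`, where `G k`
is the running maximum of `b j * j ^ ((1 - a) / 2)`.  In mirror descent `b k` is the dual norm of
the `k`-th subgradient. -/
structure IsAdaptiveStepSize (b : ℕ → ℝ) (a c : ℝ) (N : ℕ) (G γ : ℕ → ℝ) : Prop where
  scale_eq : ∀ k (hk : 1 ≤ k), k ≤ N → G k = (Icc 1 k).sup' (nonempty_Icc.mpr hk)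
    (fun j => b j * (j : ℝ) ^ ((1 - a) / 2))
  step_eq : ∀ k, 1 ≤ k → k ≤ N → γ k = c / (G k * (k : ℝ) ^ (a / 2))

namespace IsAdaptiveStepSize

variable {b : ℕ → ℝ} {a c : ℝ} {N : ℕ} {G γ : ℕ → ℝ} {k : ℕ}

theorem le_scale (h : IsAdaptiveStepSize b a c N G γ) (hk : k ∈ Set.Icc 1 N) :
    b k * (k : ℝ) ^ ((1 - a) / 2) ≤ G k := by
  rw [h.scale_eq k hk.1 hk.2]
  exact le_sup' (fun j : ℕ => b j * (j : ℝ) ^ ((1 - a) / 2)) (right_mem_Icc.2 hk.1)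

theorem scale_le (h : IsAdaptiveStepSize b a c N G γ) (ha1 : a ≤ 1) {M : ℝ} (hM : 0 ≤ M)
    (hbM : ∀ j ∈ Set.Icc 1 N, b j ≤ M) (hk : k ∈ Set.Icc 1 N) :
    G k ≤ M * (k : ℝ) ^ ((1 - a) / 2) := by
  rw [h.scale_eq k hk.1 hk.2]
  refine sup'_le _ _ fun j hj => ?_
  obtain ⟨hj1, hjk⟩ := mem_Icc.1 hj
  gcongr
  exact hbM j ⟨hj1, hjk.trans hk.2⟩

theorem scale_pos (h : IsAdaptiveStepSize b a c N G γ) (hk : k ∈ Set.Icc 1 N) (hb : 0 < b k) :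
    0 < G k := by
  have hk0 : (0 : ℝ) < k := Nat.cast_pos.2 hk.1
  exact (by positivity : 0 < b k * (k : ℝ) ^ ((1 - a) / 2)).trans_le (h.le_scale hk)

theorem scale_monotoneOn (h : IsAdaptiveStepSize b a c N G γ) : MonotoneOn G (Set.Icc 1 N) := by
  intro j hj k hk hjk
  rw [h.scale_eq j hj.1 hj.2, h.scale_eq k hk.1 hk.2]
  exact sup'_mono _ (Icc_subset_Icc_right hjk) _

theorem step_pos (h : IsAdaptiveStepSize b a c N G γ) (hc : 0 < c) (hk : k ∈ Set.Icc 1 N)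
    (hb : 0 < b k) : 0 < γ k := by
  have hk0 : (0 : ℝ) < k := Nat.cast_pos.2 hk.1
  have hGk := h.scale_pos hk hb
  rw [h.step_eq k hk.1 hk.2]
  positivity

theorem step_antitoneOn (h : IsAdaptiveStepSize b a c N G γ) (hc : 0 ≤ c) (ha0 : 0 ≤ a)
    (hb : ∀ k ∈ Set.Icc 1 N, 0 < b k) : AntitoneOn γ (Set.Icc 1 N) := by
  intro j hj k hk hjk
  have : (0 : ℝ) < j := Nat.cast_pos.2 hj.1
  have hGj := h.scale_pos hj (hb j hj)
  have hGk := h.scale_pos hk (hb k hk)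
  rw [h.step_eq j hj.1 hj.2, h.step_eq k hk.1 hk.2]
  gcongr
  exact h.scale_monotoneOn hj hk hjk

theorem sq_step_mul_le (h : IsAdaptiveStepSize b a c N G γ) (hc : 0 ≤ c) (hk : k ∈ Set.Icc 1 N)
    (hb : 0 < b k) : (γ k * b k) ^ 2 ≤ c ^ 2 / k := by
  have hk0 : (0 : ℝ) < k := Nat.cast_pos.2 hk.1
  have hGk := h.scale_pos hk hb
  calc (γ k * b k) ^ 2 = (c / (G k * (k : ℝ) ^ (a / 2)) * b k) ^ 2 := by
        rw [h.step_eq k hk.1 hk.2]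
    _ ≤ (c / (b k * (k : ℝ) ^ ((1 - a) / 2) * (k : ℝ) ^ (a / 2)) * b k) ^ 2 := by
        gcongr
        exact h.le_scale hk
    _ = (c / √k) ^ 2 := by
        rw [mul_assoc, rpow_mul_rpow_eq_sqrt hk0]
        field_simp
    _ = c ^ 2 / k := by rw [div_pow, Real.sq_sqrt hk0.le]

theorem inv_step_le (h : IsAdaptiveStepSize b a c N G γ) (hc : 0 ≤ c) (ha1 : a ≤ 1) {M : ℝ}
    (hM : 0 ≤ M) (hbM : ∀ j ∈ Set.Icc 1 N, b j ≤ M) (hk : k ∈ Set.Icc 1 N) :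
    (γ k)⁻¹ ≤ M / c * √k := by
  calc (γ k)⁻¹ = G k * (k : ℝ) ^ (a / 2) / c := by rw [h.step_eq k hk.1 hk.2, inv_div]
    _ ≤ M * (k : ℝ) ^ ((1 - a) / 2) * (k : ℝ) ^ (a / 2) / c := by
        gcongr
        exact h.scale_le ha1 hM hbM hk
    _ = M / c * √k := by
        rw [mul_assoc, rpow_mul_rpow_eq_sqrt (Nat.cast_pos.2 hk.1)]
        ring

end IsAdaptiveStepSize

theorem div_sum_le_of_rpow_bounds {τ ω : ℕ → ℝ} {A β m : ℝ} {N : ℕ} (hN : 1 ≤ N) (hA : 0 < A)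
    (hβ : 0 ≤ β) (hω : ∀ k ∈ Set.Icc 1 N, A * (k : ℝ) ^ (m / 2) ≤ ω k)
    (hτ : ∀ k ∈ Set.Icc 1 N, τ k ≤ A * (β * (k : ℝ) ^ ((m + 1) / 2))) :
    (τ N + ∑ k ∈ Icc 1 N, τ k / k) / ∑ k ∈ Icc 1 N, ω k ≤
      β * (((N : ℝ) ^ ((m + 1) / 2) + ∑ k ∈ Icc 1 N, (k : ℝ) ^ ((m - 1) / 2))
        / ∑ k ∈ Icc 1 N, (k : ℝ) ^ (m / 2)) := by
  have hk0 : ∀ k ∈ Icc 1 N, (0 : ℝ) < k := fun k hk => Nat.cast_pos.2 (mem_Icc.1 hk).1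
  have hterm : ∀ k ∈ Icc 1 N, τ k / k ≤ A * β * (k : ℝ) ^ ((m - 1) / 2) := fun k hk => by
    have hpow : (k : ℝ) ^ ((m + 1) / 2) = (k : ℝ) ^ ((m - 1) / 2) * k := by
      rw [← Real.rpow_add_one (hk0 k hk).ne']
      ring_nf
    rw [div_le_iff₀ (hk0 k hk), mul_assoc, mul_assoc, ← hpow]
    exact hτ k (mem_Icc.1 hk)
  have hden : 0 < A * ∑ k ∈ Icc 1 N, (k : ℝ) ^ (m / 2) :=
    mul_pos hA (sum_pos (fun k hk => Real.rpow_pos_of_pos (hk0 k hk) _) (nonempty_Icc.2 hN))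
  calc (τ N + ∑ k ∈ Icc 1 N, τ k / k) / ∑ k ∈ Icc 1 N, ω k
      ≤ (A * (β * (N : ℝ) ^ ((m + 1) / 2)) + ∑ k ∈ Icc 1 N, A * β * (k : ℝ) ^ ((m - 1) / 2))
          / (A * ∑ k ∈ Icc 1 N, (k : ℝ) ^ (m / 2)) := by
        refine div_le_div₀ (by positivity)
          (add_le_add (hτ N ⟨hN, le_rfl⟩) (sum_le_sum hterm)) hden ?_
        rw [mul_sum]
        exact sum_le_sum fun k hk => hω k (mem_Icc.1 hk)
    _ = _ := by
        rw [← mul_sum]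
        field_simp

/-- The averaging weight `ω_k^{(m)}` of the `k`-th iterate of a method with step sizes `γ`.  The two
cases agree at `m = 0`. -/
noncomputable def ergodicWeight (m : ℝ) (γ : ℕ → ℝ) (k : ℕ) : ℝ :=
  if m ≤ 0 then γ k ^ (-m) else (k : ℝ) ^ (m / 2)

namespace ergodicWeight

variable {m β : ℝ} {γ : ℕ → ℝ} {k : ℕ}

theorem pos (hk : 1 ≤ k) (hγ : 0 < γ k) : 0 < ergodicWeight m γ k := by
  have : (0 : ℝ) < k := Nat.cast_pos.2 hk
  unfold ergodicWeight
  split_ifs <;> positivity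

theorem div_eq_inv_rpow (hm : m ≤ 0) (hγ : 0 < γ k) :
    ergodicWeight m γ k / γ k = (γ k)⁻¹ ^ (m + 1) := by
  rw [ergodicWeight, if_pos hm, Real.inv_rpow hγ.le, ← Real.rpow_neg hγ.le,
    ← Real.rpow_sub_one hγ.ne', neg_add']

theorem div_monotoneOn (hm : -1 ≤ m) {s : Set ℕ} (hγ : ∀ k ∈ s, 0 < γ k)
    (hanti : AntitoneOn γ s) : MonotoneOn (fun k => ergodicWeight m γ k / γ k) s := by
  intro j hj k hk hjk
  have hγj := hγ j hj
  have hγk := hγ k hk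
  have hle := hanti hj hk hjk
  beta_reduce
  rcases le_or_gt m 0 with hm0 | hm0
  · rw [div_eq_inv_rpow hm0 hγj, div_eq_inv_rpow hm0 hγk]
    gcongr
    linarith
  · simp only [ergodicWeight, if_neg hm0.not_ge]
    gcongr

theorem exists_rpow_bounds (hm : -1 ≤ m) (hβ : 0 < β) (γ : ℕ → ℝ) :
    ∃ A > 0, ∀ k, 0 < γ k → (γ k)⁻¹ ≤ β * √k →
      A * (k : ℝ) ^ (m / 2) ≤ ergodicWeight m γ k ∧
        ergodicWeight m γ k / γ k ≤ A * (β * (k : ℝ) ^ ((m + 1) / 2)) := by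
  simp only [Real.rpow_div_two_eq_sqrt _ (Nat.cast_nonneg _)]
  rcases le_or_gt m 0 with hm0 | hm0
  · refine ⟨β ^ m, by positivity, fun k hγ hle => ⟨?_, ?_⟩⟩
    · calc β ^ m * √k ^ m = (β * √k) ^ m := (Real.mul_rpow hβ.le (Real.sqrt_nonneg _)).symm
        _ ≤ (γ k)⁻¹ ^ m := Real.rpow_le_rpow_of_nonpos (inv_pos.2 hγ) hle hm0
        _ = ergodicWeight m γ k := by
          rw [ergodicWeight, if_pos hm0, Real.inv_rpow hγ.le, Real.rpow_neg hγ.le]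
    · calc ergodicWeight m γ k / γ k = (γ k)⁻¹ ^ (m + 1) := div_eq_inv_rpow hm0 hγ
        _ ≤ (β * √k) ^ (m + 1) := by
          gcongr
          linarith
        _ = β ^ m * (β * √k ^ (m + 1)) := by
          rw [Real.mul_rpow hβ.le (Real.sqrt_nonneg _), Real.rpow_add_one hβ.ne', mul_assoc]
  · have hweight : ∀ k, ergodicWeight m γ k = √k ^ m := fun k => by
      rw [ergodicWeight, if_neg hm0.not_ge, Real.rpow_div_two_eq_sqrt _ (Nat.cast_nonneg k)]
    refine ⟨1, one_pos, fun k _ hle => ⟨by rw [one_mul, hweight], ?_⟩⟩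
    calc ergodicWeight m γ k / γ k = √k ^ m * (γ k)⁻¹ := by rw [hweight, div_eq_mul_inv]
      _ ≤ √k ^ m * (β * √k) := by gcongr
      _ = 1 * (β * √k ^ (m + 1)) := by
        rw [Real.rpow_add_one' (Real.sqrt_nonneg _) (by linarith)]
        ring

theorem div_sum_le (hm : -1 ≤ m) (hβ : 0 < β) {N : ℕ} (hN : 1 ≤ N)
    (hγ : ∀ k ∈ Set.Icc 1 N, 0 < γ k) (hinv : ∀ k ∈ Set.Icc 1 N, (γ k)⁻¹ ≤ β * √k) :
    (ergodicWeight m γ N / γ N + ∑ k ∈ Icc 1 N, ergodicWeight m γ k / γ k / k)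
        / ∑ k ∈ Icc 1 N, ergodicWeight m γ k ≤
      β * (((N : ℝ) ^ ((m + 1) / 2) + ∑ k ∈ Icc 1 N, (k : ℝ) ^ ((m - 1) / 2))
        / ∑ k ∈ Icc 1 N, (k : ℝ) ^ (m / 2)) := by
  obtain ⟨A, hA, hbounds⟩ := exists_rpow_bounds hm hβ γ
  exact div_sum_le_of_rpow_bounds hN hA hβ.le (fun k hk => (hbounds k (hγ k hk) (hinv k hk)).1)
    fun k hk => (hbounds k (hγ k hk) (hinv k hk)).2

end ergodicWeight

theorem lipschitz_free_mirror_descent_weak_ergodic_general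
    {E : Type*} [NormedAddCommGroup E] [NormedSpace ℝ E]
    {Q : Set E} {ψ : E → ℝ} {ψ' : E → E →L[ℝ] ℝ} {σ : ℝ} (hσ : 0 < σ)
    (hψd : ∀ y ∈ Q, HasFDerivWithinAt ψ (ψ' y) Q y) (hψ : StrongConvexOn Q σ ψ)
    {f : E → ℝ} (hf : ConvexOn ℝ Q f) {u : E} (hu : u ∈ Q) {R a m : ℝ} (hR : 0 < R)
    (ha0 : 0 ≤ a) (ha1 : a ≤ 1) (hm : -1 ≤ m) {N : ℕ} (hN : 1 ≤ N)
    {x : ℕ → E} {g : ℕ → E →L[ℝ] ℝ} {G γ : ℕ → ℝ} (hx : IsMirrorDescent f Q ψ ψ' g γ N x)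
    (hV : ∀ k ∈ Set.Icc 1 N, bregman ψ ψ' u (x k) ≤ R) (hg : ∀ k ∈ Set.Icc 1 N, g k ≠ 0)
    (hγ : IsAdaptiveStepSize (fun k => ‖g k‖) a √(2 * σ * R) N G γ) :
    f ((Icc 1 N).centerMass (ergodicWeight m γ) x) - f u ≤
      √(R / (2 * σ))
        * (((N : ℝ) ^ ((m + 1) / 2) + ∑ k ∈ Icc 1 N, (k : ℝ) ^ ((m - 1) / 2))
            / ∑ k ∈ Icc 1 N, (k : ℝ) ^ (m / 2))
        * (Icc 1 N).sup' (nonempty_Icc.mpr hN) (fun k => ‖g k‖) := by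
  have hconst : √(R / (2 * σ)) = R / √(2 * σ * R) := by
    rw [Real.sqrt_div hR.le, Real.sqrt_mul' _ hR.le, mul_comm √(2 * σ), ← div_div,
      Real.div_sqrt]
  set c := √(2 * σ * R)
  set M := (Icc 1 N).sup' (nonempty_Icc.mpr hN) fun k => ‖g k‖
  have hc : 0 < c := Real.sqrt_pos.2 (by positivity)
  have hcsq : c ^ 2 = 2 * σ * R := Real.sq_sqrt (by positivity)
  have hgpos : ∀ k ∈ Set.Icc 1 N, 0 < ‖g k‖ := fun k hk => norm_pos_iff.2 (hg k hk)
  have hgM : ∀ k ∈ Set.Icc 1 N, ‖g k‖ ≤ M := fun k hk =>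
    le_sup' (fun k => ‖g k‖) (mem_Icc.2 hk)
  have hM : 0 < M := (hgpos 1 ⟨le_rfl, hN⟩).trans_le (hgM 1 ⟨le_rfl, hN⟩)
  have hγpos : ∀ k ∈ Set.Icc 1 N, 0 < γ k := fun k hk => hγ.step_pos hc hk (hgpos k hk)
  have hγg : ∀ k ∈ Set.Icc 1 N, (γ k * ‖g k‖) ^ 2 ≤ 2 * σ * R / k := fun k hk =>
    (hγ.sq_step_mul_le hc.le hk (hgpos k hk)).trans_eq (by rw [hcsq])
  have hgap := hx.map_centerMass_sub_le hσ hψd hψ hf hu hN hV hγpos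
    (fun k hk => ergodicWeight.pos hk.1 (hγpos k hk))
    (ergodicWeight.div_monotoneOn hm hγpos (hγ.step_antitoneOn hc.le ha0 hgpos)) hγg
  have hratio := ergodicWeight.div_sum_le hm (div_pos hM hc) hN hγpos fun k hk =>
    hγ.inv_step_le hc.le ha1 hM.le hgM hk
  refine (hgap.trans (mul_le_mul_of_nonneg_left hratio hR.le)).trans_eq ?_
  rw [hconst]
  ring

/-- **Theorem 1 (Lipschitz-free mirror descent, weak ergodic convergence).**
With adaptive step sizes `γ_k = √(2σR)/(G_k k^{a/2})`, `G_k = max_{j≤k} ‖∇f(x^j)‖_* j^{(1−a)/2}`,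
weights `ω_k = γ_k^{−m}` (if `−1 ≤ m ≤ 0`) or `k^{m/2}` (if `m > 0`), and
`x̂ = (∑ ω_k x^k)/(∑ ω_k)`:
`f(x̂) − f(x*) ≤ √(R/(2σ)) · (N^{(m+1)/2} + ∑ k^{(m−1)/2})/(∑ k^{m/2}) · max_k ‖∇f(x^k)‖_*`. -/
theorem lipschitz_free_mirror_descent_weak_ergodic
    {E : Type*} [NormedAddCommGroup E] [NormedSpace ℝ E] [FiniteDimensional ℝ E]
    (Q : Set E) (hQcomp : IsCompact Q) (hQconv : Convex ℝ Q)
    (ψ : E → ℝ) (ψ' : E → E →L[ℝ] ℝ) (σ : ℝ) (hσ : 0 < σ)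
    (hψdiff : ∀ x ∈ Q, HasFDerivWithinAt ψ (ψ' x) Q x)
    (hψstrong : StrongConvexOn Q σ ψ)
    (f : E → ℝ) (hfconv : ConvexOn ℝ Q f) (hfcont : ContinuousOn f Q)
    (xstar : E) (hxstarQ : xstar ∈ Q) (hxstar : IsMinOn f Q xstar)
    (R : ℝ) (hR : 0 < R) (hbound : ∀ x ∈ Q, bregman ψ ψ' xstar x ≤ R)
    (a m : ℝ) (ha0 : 0 ≤ a) (ha1 : a ≤ 1) (hm : -1 ≤ m)
    (N : ℕ) (hN : 1 ≤ N)
    (x : ℕ → E) (gf : ℕ → E →L[ℝ] ℝ) (G γ ω : ℕ → ℝ)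
    (hx1 : x 1 ∈ Q)
    (hsub : ∀ k, 1 ≤ k → k ≤ N → IsSubgradientAt f Q (gf k) (x k))
    (hgf : ∀ k, 1 ≤ k → k ≤ N → gf k ≠ 0)
    (hG : ∀ k (hk : 1 ≤ k), k ≤ N →
      G k = (Finset.Icc 1 k).sup' (Finset.nonempty_Icc.mpr hk)
        (fun j => ‖gf j‖ * (j : ℝ) ^ ((1 - a) / 2)))
    (hγ : ∀ k, 1 ≤ k → k ≤ N →
      γ k = Real.sqrt (2 * σ * R) / (G k * (k : ℝ) ^ (a / 2)))
    (hstep : ∀ k, 1 ≤ k → k ≤ N → x (k + 1) ∈ Q ∧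
      IsMinOn (fun z => gf k z + (1 / γ k) * bregman ψ ψ' z (x k)) Q (x (k + 1)))
    (hω : ∀ k, ω k = if m ≤ 0 then γ k ^ (-m) else (k : ℝ) ^ (m / 2)) :
    f ((∑ k ∈ Finset.Icc 1 N, ω k)⁻¹ • ∑ k ∈ Finset.Icc 1 N, ω k • x k) - f xstar ≤
      Real.sqrt (R / (2 * σ))
        * (((N : ℝ) ^ ((m + 1) / 2) + ∑ k ∈ Finset.Icc 1 N, (k : ℝ) ^ ((m - 1) / 2))
            / (∑ k ∈ Finset.Icc 1 N, (k : ℝ) ^ (m / 2)))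
        * (Finset.Icc 1 N).sup' (Finset.nonempty_Icc.mpr hN) (fun k => ‖gf k‖) := by
  obtain rfl : ω = ergodicWeight m γ := funext hω
  have hx : IsMirrorDescent f Q ψ ψ' gf γ N x := ⟨hx1, hsub, hstep⟩
  exact lipschitz_free_mirror_descent_weak_ergodic_general hσ hψdiff hψstrong hfconv hxstarQ hR
    ha0 ha1 hm hN hx (fun k hk => hbound _ (hx.mem ⟨hk.1, hk.2.trans N.le_succ⟩))
    (fun k hk => hgf k hk.1 hk.2) ⟨hG, hγ⟩
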